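/- arXiv:1809.05460 — 2 statements merged into one kernel-verified Lean document; each statement's English description precedes it below -/
import Mathlib

section
/- Let G ⊆ UT(n,ℝ) be a real unipotent group, F : ℝ^d → G a polynomial map, and X = F(ℝ^d). Suppose g ∈ G and H is a real algebraic subgroup of G such that gH is the minimal coset of a real algebraic subgroup of G containing X (X ⊆ gH, and gH ⊆ g'H' whenever g' ∈ G, H' is a real algebraic subgroup of G and X ⊆ g'H'). Then there exists α ∈ X^♯ whose nearest coset is gH; that is, the coset gH is near α and gH ⊆ g'H' for every g' ∈ G and real algebraic subgroup H' ⊆ G such that the coset g'H' is near α. -/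
open Pointwise Filter

noncomputable section

/-- Square matrices of size `n` over `R`. -/
abbrev Mat (n : ℕ) (R : Type) : Type := Matrix (Fin n) (Fin n) R

/-- The set `UT(n,ℝ)` of upper triangular matrices with `1`s on the diagonal. -/
def UTset (n : ℕ) : Set (Mat n ℝ) :=
  {A | (∀ i, A i i = 1) ∧ ∀ i j : Fin n, (j : ℕ) < (i : ℕ) → A i j = 0}

/-- The entries of a matrix, as a point of `ℝ^(n²)`. -/
def matEval {n : ℕ} (A : Mat n ℝ) : Fin n × Fin n → ℝ := fun ij => A ij.1 ij.2

/-- A real unipotent group: a subgroup of `UT(n,ℝ)` which is the common zero set in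
`UT(n,ℝ)` of a family of real polynomials in the matrix entries. -/
def IsRealUnipotentGroup (n : ℕ) (G : Set (Mat n ℝ)) : Prop :=
  (∃ S : Set (MvPolynomial (Fin n × Fin n) ℝ),
      G = {A | A ∈ UTset n ∧ ∀ p ∈ S, MvPolynomial.eval (matEval A) p = 0}) ∧
    (1 : Mat n ℝ) ∈ G ∧ (∀ a ∈ G, ∀ b ∈ G, a * b ∈ G) ∧ ∀ a ∈ G, a⁻¹ ∈ G

/-- A real algebraic subgroup of a real unipotent group `G`. -/
def IsRealAlgSubgroup (n : ℕ) (G H : Set (Mat n ℝ)) : Prop :=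
  H ⊆ G ∧ IsRealUnipotentGroup n H

/-- `N` is a normal subgroup-set of `G`. -/
def IsNormalIn (n : ℕ) (G N : Set (Mat n ℝ)) : Prop :=
  ∀ g ∈ G, ∀ x ∈ N, g * x * g⁻¹ ∈ N

/-- `Γ` is a lattice in `G`: a discrete subgroup which is cocompact, i.e. there is a
compact `K ⊆ G` with `K·Γ = G` (equivalently, `G/Γ` is compact). -/
def IsLatticeIn (n : ℕ) (G Γ : Set (Mat n ℝ)) : Prop :=
  Γ ⊆ G ∧ (1 : Mat n ℝ) ∈ Γ ∧ (∀ a ∈ Γ, ∀ b ∈ Γ, a * b ∈ Γ) ∧ (∀ a ∈ Γ, a⁻¹ ∈ Γ) ∧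
    DiscreteTopology ↥Γ ∧
    ∃ K : Set (Mat n ℝ), K ⊆ G ∧ IsCompact K ∧ ∀ g ∈ G, ∃ k ∈ K, ∃ γ ∈ Γ, g = k * γ

/-- `H` is `Γ`-rational: `Γ ∩ H` is a lattice in `H`. -/
def IsRationalFor (n : ℕ) (Γ H : Set (Mat n ℝ)) : Prop :=
  IsLatticeIn n H (Γ ∩ H)

/-- The hyperreal matrix represented by a sequence of real matrices. -/
def matOfSeq (n : ℕ) (u : ℕ → Mat n ℝ) : Mat n Hyperreal :=
  Matrix.of fun i j => Hyperreal.ofSeq fun k => u k i j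

/-- The nonstandard extension `S^♯` of a set `S` of real matrices: hyperreal matrices
represented by sequences landing in `S` on a set of indices in the ultrafilter. -/
def matSharp (n : ℕ) (S : Set (Mat n ℝ)) : Set (Mat n Hyperreal) :=
  {A | ∃ u : ℕ → Mat n ℝ, (∀ᶠ k in hyperfilter ℕ, u k ∈ S) ∧ A = matOfSeq n u}

/-- The canonical embedding of real matrices into hyperreal matrices. -/
def matCast {n : ℕ} (A : Mat n ℝ) : Mat n Hyperreal :=
  Matrix.of fun i j => (A i j : Hyperreal)

/-- `μ(G)`: elements of `G^♯` all of whose entries are infinitesimally close to the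
corresponding entries of the identity matrix. -/
def muSet (n : ℕ) (G : Set (Mat n ℝ)) : Set (Mat n Hyperreal) :=
  {A | A ∈ matSharp n G ∧ ∀ i j, Hyperreal.Infinitesimal (A i j - (1 : Mat n Hyperreal) i j)}

/-- The coset `gH` is near `α`, i.e. `α ∈ μ(G)·g·H^♯`. -/
def NearCoset (n : ℕ) (G : Set (Mat n ℝ)) (g : Mat n ℝ) (H : Set (Mat n ℝ))
    (α : Mat n Hyperreal) : Prop :=
  α ∈ muSet n G * ({matCast g} * matSharp n H)

/-- The set of standard parts of the finite elements of a set of hyperreal matrices. -/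
def matStSet (n : ℕ) (A : Set (Mat n Hyperreal)) : Set (Mat n ℝ) :=
  {B | ∃ a ∈ A, ∀ i j, Hyperreal.IsSt (a i j) (B i j)}

/-- A polynomial map `ℝ^d → Mat n ℝ`. -/
def IsPolyMapVec (d n : ℕ) (F : (Fin d → ℝ) → Mat n ℝ) : Prop :=
  ∃ P : Fin n → Fin n → MvPolynomial (Fin d) ℝ,
    ∀ x i j, F x i j = MvPolynomial.eval x (P i j)

/-- The inclusion `ℝ →+* ℝ*` as a ring homomorphism. -/
def realHyperRingHom : ℝ →+* Hyperreal where
  toFun r := (r : Hyperreal)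
  map_one' := Hyperreal.coe_one
  map_mul' := Hyperreal.coe_mul
  map_zero' := Hyperreal.coe_zero
  map_add' := Hyperreal.coe_add

/-- A semialgebraic subset of matrix space: a finite union of sets defined by finitely
many polynomial equations and finitely many strict polynomial inequalities. -/
def IsSemialgebraic (n : ℕ) (S : Set (Mat n ℝ)) : Prop :=
  ∃ (k : ℕ) (P Q : Fin k → Finset (MvPolynomial (Fin n × Fin n) ℝ)),
    S = ⋃ t : Fin k, {A | (∀ p ∈ P t, MvPolynomial.eval (matEval A) p = 0) ∧
      ∀ q ∈ Q t, 0 < MvPolynomial.eval (matEval A) q}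


/-- Polynomials all of whose monomials have weight `< w`. -/
def QW {σ : Type} (wt : σ → ℕ) (w : ℕ) : Submodule ℝ (MvPolynomial σ ℝ) :=
  MvPolynomial.restrictSupport ℝ {d | Finsupp.weight wt d < w}

lemma QW_mono {σ : Type} (wt : σ → ℕ) {a b : ℕ} (h : a ≤ b) : QW wt a ≤ QW wt b :=
  MvPolynomial.restrictSupport_mono ℝ (fun _ hd => lt_of_lt_of_le hd h)

lemma QW_mul {σ : Type} (wt : σ → ℕ) {a b : ℕ} {p q : MvPolynomial σ ℝ}
    (hp : p ∈ QW wt (a + 1)) (hq : q ∈ QW wt b) : p * q ∈ QW wt (a + b) := by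
  have h := Submodule.mul_mem_mul hp hq
  unfold QW at h
  rw [← MvPolynomial.restrictSupport_add] at h
  refine MvPolynomial.restrictSupport_mono ℝ ?_ h
  rintro _ ⟨x, hx, y, hy, rfl⟩
  simp only [Set.mem_ofPred_eq, map_add] at *
  omega

lemma QW_monomial {σ : Type} (wt : σ → ℕ) (d : σ →₀ ℕ) (c : ℝ) {w : ℕ}
    (h : Finsupp.weight wt d < w) : MvPolynomial.monomial d c ∈ QW wt w := by
  unfold QW
  rw [MvPolynomial.monomial_mem_restrictSupport]
  exact Or.inl h

lemma QW_zero {σ : Type} (wt : σ → ℕ) {p : MvPolynomial σ ℝ} (h : p ∈ QW wt 0) : p = 0 := by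
  unfold QW at h
  rw [MvPolynomial.mem_restrictSupport_iff] at h
  rw [← MvPolynomial.support_eq_empty, Finset.eq_empty_iff_forall_notMem]
  intro d hd
  have := h hd
  simp at this

lemma QW_exists {σ : Type} (wt : σ → ℕ) (p : MvPolynomial σ ℝ) : ∃ w, p ∈ QW wt w := by
  refine ⟨MvPolynomial.weightedTotalDegree wt p + 1, ?_⟩
  unfold QW
  rw [MvPolynomial.mem_restrictSupport_iff]
  intro d hd
  exact Nat.lt_succ_of_le (MvPolynomial.le_weightedTotalDegree wt hd)

lemma QW_shift_monomial {σ : Type} (wt : σ → ℕ)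
    (τ : MvPolynomial σ ℝ →ₐ[ℝ] MvPolynomial σ ℝ)
    (hτ : ∀ s, τ (MvPolynomial.X s) - MvPolynomial.X s ∈ QW wt (wt s)) (d : σ →₀ ℕ) :
    τ (MvPolynomial.monomial d 1) - MvPolynomial.monomial d 1 ∈ QW wt (Finsupp.weight wt d) := by
  have hadd : ∀ d e : σ →₀ ℕ,
      τ (MvPolynomial.monomial d 1) - MvPolynomial.monomial d 1 ∈ QW wt (Finsupp.weight wt d) →
      τ (MvPolynomial.monomial e 1) - MvPolynomial.monomial e 1 ∈ QW wt (Finsupp.weight wt e) →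
      τ (MvPolynomial.monomial (d + e) 1) - MvPolynomial.monomial (d + e) 1
        ∈ QW wt (Finsupp.weight wt (d + e)) := by
    intro d e hd he
    have h1 : MvPolynomial.monomial (d + e) (1 : ℝ)
        = MvPolynomial.monomial d 1 * MvPolynomial.monomial e 1 := by
      rw [MvPolynomial.monomial_mul, one_mul]
    have hmd : MvPolynomial.monomial d (1 : ℝ) ∈ QW wt (Finsupp.weight wt d + 1) :=
      QW_monomial wt d 1 (Nat.lt_succ_self _)
    have hme : MvPolynomial.monomial e (1 : ℝ) ∈ QW wt (Finsupp.weight wt e + 1) :=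
      QW_monomial wt e 1 (Nat.lt_succ_self _)
    have hte : τ (MvPolynomial.monomial e (1 : ℝ)) ∈ QW wt (Finsupp.weight wt e + 1) := by
      have := Submodule.add_mem _ (QW_mono wt (Nat.le_succ _) he) hme
      simpa using this
    have h2 : τ (MvPolynomial.monomial (d + e) 1) - MvPolynomial.monomial (d + e) 1
        = τ (MvPolynomial.monomial e (1 : ℝ)) *
            (τ (MvPolynomial.monomial d 1) - MvPolynomial.monomial d 1)
          + MvPolynomial.monomial d 1 *
            (τ (MvPolynomial.monomial e 1) - MvPolynomial.monomial e 1) := by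
      rw [h1, map_mul]; ring
    rw [h2, map_add]
    refine Submodule.add_mem _ ?_ (QW_mul wt hmd he)
    rw [add_comm]
    exact QW_mul wt hte hd
  induction d using Finsupp.induction_linear with
  | zero => simp
  | add d e hd he => exact hadd d e hd he
  | single s k =>
    induction k with
    | zero => simp
    | succ k ih =>
      rw [Finsupp.single_add]
      refine hadd _ _ ih ?_
      have := hτ s
      simpa [MvPolynomial.X, Finsupp.weight_single] using this

lemma QW_shift {σ : Type} (wt : σ → ℕ)
    (τ : MvPolynomial σ ℝ →ₐ[ℝ] MvPolynomial σ ℝ)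
    (hτ : ∀ s, τ (MvPolynomial.X s) - MvPolynomial.X s ∈ QW wt (wt s))
    {p : MvPolynomial σ ℝ} {w : ℕ} (hp : p ∈ QW wt (w + 1)) : τ p - p ∈ QW wt w := by
  have h1 : τ p - p = ∑ d ∈ p.support, MvPolynomial.coeff d p •
      (τ (MvPolynomial.monomial d 1) - MvPolynomial.monomial d 1) := by
    conv_lhs => rw [p.as_sum]
    rw [map_sum, ← Finset.sum_sub_distrib]
    refine Finset.sum_congr rfl fun d _ => ?_
    have : MvPolynomial.monomial d (MvPolynomial.coeff d p)
        = MvPolynomial.coeff d p • MvPolynomial.monomial d (1 : ℝ) := by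
      rw [MvPolynomial.smul_monomial, smul_eq_mul, mul_one]
    rw [this, map_smul, smul_sub]
  rw [h1]
  refine Submodule.sum_mem _ fun d hd => Submodule.smul_mem _ _ ?_
  have : Finsupp.weight wt d < w + 1 := by
    unfold QW at hp
    rw [MvPolynomial.mem_restrictSupport_iff] at hp
    exact hp hd
  exact QW_mono wt (Nat.lt_succ_iff.mp this) (QW_shift_monomial wt τ hτ d)

/-- evaluation of a polynomial at a matrix -/
def evm {n : ℕ} (p : MvPolynomial (Fin n × Fin n) ℝ) (A : Mat n ℝ) : ℝ :=
  MvPolynomial.eval (matEval A) p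

/-- The weight. -/
def wtm (n : ℕ) : Fin n × Fin n → ℕ := fun ij => (n - (ij.1 : ℕ)) + (ij.2 : ℕ)

/-- Left translation. -/
def ltr {n : ℕ} (A : Mat n ℝ) :
    MvPolynomial (Fin n × Fin n) ℝ →ₐ[ℝ] MvPolynomial (Fin n × Fin n) ℝ :=
  MvPolynomial.aeval fun ij => ∑ k, A ij.1 k • MvPolynomial.X (k, ij.2)

/-- Right translation. -/
def rtr {n : ℕ} (A : Mat n ℝ) :
    MvPolynomial (Fin n × Fin n) ℝ →ₐ[ℝ] MvPolynomial (Fin n × Fin n) ℝ :=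
  MvPolynomial.aeval fun ij => ∑ k, A k ij.2 • MvPolynomial.X (ij.1, k)

lemma evm_aeval {n : ℕ} (f : Fin n × Fin n → MvPolynomial (Fin n × Fin n) ℝ)
    (p : MvPolynomial (Fin n × Fin n) ℝ) (B C : Mat n ℝ) (h : ∀ i j, evm (f (i, j)) B = C i j) :
    evm (MvPolynomial.aeval f p) B = evm p C := by
  unfold evm at *
  induction p using MvPolynomial.induction_on with
  | C a => simp
  | add p q hp hq => rw [map_add, map_add, hp, hq, map_add]
  | mul_X p s hp =>
    rw [map_mul, map_mul, hp, MvPolynomial.aeval_X, map_mul, MvPolynomial.eval_X]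
    rw [show s = (s.1, s.2) from rfl, h]
    rfl

lemma evm_ltr {n : ℕ} (A B : Mat n ℝ) (p : MvPolynomial (Fin n × Fin n) ℝ) :
    evm (ltr A p) B = evm p (A * B) := by
  apply evm_aeval
  intro i j
  simp [evm, matEval, Matrix.mul_apply, MvPolynomial.smul_eval]

lemma evm_rtr {n : ℕ} (A B : Mat n ℝ) (p : MvPolynomial (Fin n × Fin n) ℝ) :
    evm (rtr A p) B = evm p (B * A) := by
  apply evm_aeval
  intro i j
  simp [evm, matEval, Matrix.mul_apply, MvPolynomial.smul_eval, mul_comm]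

lemma X_mem_QW {n : ℕ} (s : Fin n × Fin n) {w : ℕ} (h : wtm n s < w) :
    (MvPolynomial.X s : MvPolynomial (Fin n × Fin n) ℝ) ∈ QW (wtm n) w := by
  unfold MvPolynomial.X
  apply QW_monomial
  simpa [Finsupp.weight_single] using h

lemma ltr_X {n : ℕ} {A : Mat n ℝ} (hA : A ∈ UTset n) (s : Fin n × Fin n) :
    ltr A (MvPolynomial.X s) - MvPolynomial.X s ∈ QW (wtm n) (wtm n s) := by
  obtain ⟨i, j⟩ := s
  have : ltr A (MvPolynomial.X (i, j)) - MvPolynomial.X (i, j)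
      = ∑ k, (A i k - if k = i then 1 else 0) • (MvPolynomial.X (k, j) :
        MvPolynomial (Fin n × Fin n) ℝ) := by
    simp [ltr, sub_smul, Finset.sum_sub_distrib, ite_smul]
  rw [this]
  refine Submodule.sum_mem _ fun k _ => ?_
  rcases lt_trichotomy (k : ℕ) (i : ℕ) with h | h | h
  · have hk : k ≠ i := fun e => by simp [e] at h
    simp [hA.2 i k h, hk]
  · have hk : k = i := Fin.ext h
    simp [hk, hA.1]
  · refine Submodule.smul_mem _ _ (X_mem_QW _ ?_)
    simp only [wtm]
    have := k.2
    omega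

lemma rtr_X {n : ℕ} {A : Mat n ℝ} (hA : A ∈ UTset n) (s : Fin n × Fin n) :
    rtr A (MvPolynomial.X s) - MvPolynomial.X s ∈ QW (wtm n) (wtm n s) := by
  obtain ⟨i, j⟩ := s
  have : rtr A (MvPolynomial.X (i, j)) - MvPolynomial.X (i, j)
      = ∑ k, (A k j - if k = j then 1 else 0) • (MvPolynomial.X (i, k) :
        MvPolynomial (Fin n × Fin n) ℝ) := by
    simp [rtr, sub_smul, Finset.sum_sub_distrib, ite_smul]
  rw [this]
  refine Submodule.sum_mem _ fun k _ => ?_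
  rcases lt_trichotomy (k : ℕ) (j : ℕ) with h | h | h
  · refine Submodule.smul_mem _ _ (X_mem_QW _ ?_)
    simp only [wtm]
    omega
  · have hk : k = j := Fin.ext h
    simp [hk, hA.1]
  · have hk : k ≠ j := fun e => by simp [e] at h
    simp [hA.2 k j h, hk]

lemma IsRealUnipotentGroup.ut {n : ℕ} {N : Set (Mat n ℝ)} (hN : IsRealUnipotentGroup n N)
    {a : Mat n ℝ} (ha : a ∈ N) : a ∈ UTset n := by
  obtain ⟨⟨S, rfl⟩, _⟩ := hN
  exact ha.1

lemma exists_hom {n : ℕ} {N H : Set (Mat n ℝ)} (hN : IsRealUnipotentGroup n N)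
    (hH : IsRealUnipotentGroup n H) (hHN : H ⊆ N) (hne : ¬ N ⊆ H) :
    ∃ p : MvPolynomial (Fin n × Fin n) ℝ,
      (∀ a ∈ N, ∀ b ∈ N, evm p (a * b) = evm p a + evm p b) ∧ (∀ h ∈ H, evm p h = 0) ∧
      ∃ a ∈ N, evm p a ≠ 0 := by
  classical
  have h1 : (1 : Mat n ℝ) ∈ H := hH.2.1
  have step1 : ∃ p : MvPolynomial (Fin n × Fin n) ℝ, (∀ a ∈ N, ∀ h ∈ H, evm p (a * h) = evm p a) ∧
      evm p 1 = 0 ∧ ∃ a ∈ N, evm p a ≠ 0 := by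
    have hex : ∃ w, ∃ p ∈ QW (wtm n) w, (∀ h ∈ H, evm p h = 0) ∧ ∃ a ∈ N, evm p a ≠ 0 := by
      obtain ⟨a, haN, haH⟩ := Set.not_subset.mp hne
      obtain ⟨⟨S, hS⟩, -⟩ := hH
      have haH' := haH
      rw [hS] at haH
      simp only [Set.mem_ofPred_eq, not_and, not_forall] at haH
      obtain ⟨p, hp, hpa⟩ := haH (hN.ut haN)
      obtain ⟨w, hw⟩ := QW_exists (wtm n) p
      refine ⟨w, p, hw, ?_, a, haN, hpa⟩
      intro h hh
      rw [hS] at hh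
      exact hh.2 p hp
    obtain ⟨p, hpw, hpH, hpN⟩ := Nat.find_spec hex
    have hmin := fun m => @Nat.find_min _ _ hex m
    generalize Nat.find hex = w at hpw hmin
    refine ⟨p, ?_, hpH 1 h1, hpN⟩
    intro a ha h hh
    cases w with
    | zero =>
      obtain ⟨b, -, hb⟩ := hpN
      rw [QW_zero _ hpw] at hb
      simp [evm] at hb
    | succ w =>
      by_contra hcon
      refine hmin w (Nat.lt_succ_self w) ⟨rtr h p - p,
        QW_shift _ _ (rtr_X (hH.ut hh)) hpw, ?_, a, ha, ?_⟩
      · intro k hk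
        have : evm (rtr h p - p) k = evm (rtr h p) k - evm p k := by simp [evm]
        rw [this, evm_rtr, hpH k hk, hpH _ (hH.2.2.1 k hk h hh), sub_zero]
      · have : evm (rtr h p - p) a = evm (rtr h p) a - evm p a := by simp [evm]
        rw [this, evm_rtr]
        exact sub_ne_zero.mpr hcon
  have hex : ∃ w, ∃ p ∈ QW (wtm n) w, (∀ a ∈ N, ∀ h ∈ H, evm p (a * h) = evm p a) ∧
      evm p 1 = 0 ∧ ∃ a ∈ N, evm p a ≠ 0 := by
    obtain ⟨p, hp⟩ := step1
    obtain ⟨w, hw⟩ := QW_exists (wtm n) p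
    exact ⟨w, p, hw, hp⟩
  obtain ⟨p, hpw, hpH, hp1, hpN⟩ := Nat.find_spec hex
  have hmin := fun m => @Nat.find_min _ _ hex m
  generalize Nat.find hex = w at hpw hmin
  refine ⟨p, ?_, ?_, hpN⟩
  swap
  · intro h hh
    have := hpH 1 (hHN h1) h hh
    rwa [one_mul, hp1] at this
  intro a ha b hb
  obtain ⟨c, hc, hcp⟩ := hpN
  match w with
  | 0 =>
    rw [QW_zero _ hpw] at hcp
    simp [evm] at hcp
  | 1 =>
    exfalso
    have h := QW_zero _ (QW_shift _ _ (ltr_X (hN.ut hc)) hpw)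
    have : evm (ltr c p - p) 1 = evm (ltr c p) 1 - evm p 1 := by simp [evm]
    rw [h, evm_ltr, hp1, mul_one] at this
    apply hcp
    simp [evm] at this
    simp [evm, ← this]
  | w + 2 =>
    by_contra hcon
    have hev : ∀ x, evm (ltr a p - p - MvPolynomial.monomial 0 (evm p a)) x
        = evm p (a * x) - evm p x - evm p a := by
      intro x
      have : evm (ltr a p - p - MvPolynomial.monomial 0 (evm p a)) x
        = evm (ltr a p) x - evm p x - evm p a := by
          simp [evm]
      rw [this, evm_ltr]
    refine hmin (w + 1) (Nat.lt_succ_self _)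
      ⟨ltr a p - p - MvPolynomial.monomial 0 (evm p a),
        Submodule.sub_mem _ (QW_shift _ _ (ltr_X (hN.ut ha)) hpw)
          (QW_monomial _ _ _ (by simp)), ?_, ?_, b, hb, ?_⟩
    · intro x hx h hh
      rw [hev, hev, hpH x hx h hh, ← mul_assoc, hpH _ (hN.2.2.1 a ha x hx) h hh]
    · rw [hev, hp1, mul_one]; ring
    · rw [hev]
      intro h
      apply hcon
      linarith

lemma poly_bound {d : ℕ} (q : MvPolynomial (Fin d) ℝ) :
    ∃ (C : ℝ) (D : ℕ), 0 ≤ C ∧ ∀ x : Fin d → ℝ, |MvPolynomial.eval x q| ≤ C * (1 + ‖x‖) ^ D := by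
  induction q using MvPolynomial.induction_on with
  | C a => exact ⟨|a|, 0, abs_nonneg a, fun x => by simp⟩
  | add p q hp hq =>
    obtain ⟨C, D, hC, h⟩ := hp
    obtain ⟨C', D', hC', h'⟩ := hq
    refine ⟨C + C', D + D', by positivity, fun x => ?_⟩
    have hx : (1 : ℝ) ≤ 1 + ‖x‖ := by linarith [norm_nonneg x]
    have e1 : (1 + ‖x‖) ^ D ≤ (1 + ‖x‖) ^ (D + D') := pow_le_pow_right₀ hx (by omega)
    have e2 : (1 + ‖x‖) ^ D' ≤ (1 + ‖x‖) ^ (D + D') := pow_le_pow_right₀ hx (by omega)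
    rw [map_add]
    calc _ ≤ |MvPolynomial.eval x p| + |MvPolynomial.eval x q| := abs_add_le _ _
      _ ≤ C * (1 + ‖x‖) ^ D + C' * (1 + ‖x‖) ^ D' := add_le_add (h x) (h' x)
      _ ≤ C * (1 + ‖x‖) ^ (D + D') + C' * (1 + ‖x‖) ^ (D + D') := by gcongr
      _ = _ := by ring
  | mul_X p s hp =>
    obtain ⟨C, D, hC, h⟩ := hp
    refine ⟨C, D + 1, hC, fun x => ?_⟩
    rw [map_mul, MvPolynomial.eval_X, abs_mul, pow_succ, ← mul_assoc]
    have : |x s| ≤ 1 + ‖x‖ := by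
      have := norm_le_pi_norm x s
      rw [Real.norm_eq_abs] at this
      linarith
    exact mul_le_mul (h x) this (abs_nonneg _) (by positivity)

lemma exists_dominating {d : ℕ} (u : ℕ → Fin d → ℝ) :
    ∃ y : ℕ → ℝ, (∀ k, 1 ≤ y k) ∧ ∀ q : MvPolynomial (Fin d) ℝ,
      Tendsto (fun k => |MvPolynomial.eval (u k) q| / y k) atTop (nhds 0) := by
  refine ⟨fun k => (1 + ‖u k‖ + k) ^ k, fun k => ?_, fun q => ?_⟩
  · apply one_le_pow₀
    have := norm_nonneg (u k)
    have : (0 : ℝ) ≤ k := Nat.cast_nonneg k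
    linarith
  · obtain ⟨C, D, hC, h⟩ := poly_bound q
    have hlim : Tendsto (fun k : ℕ => C / (k : ℝ)) atTop (nhds 0) :=
      tendsto_const_div_atTop_nhds_zero_nat C
    refine squeeze_zero' (Eventually.of_forall fun k => ?_) ?_ hlim
    · have := norm_nonneg (u k)
      positivity
    · filter_upwards [eventually_ge_atTop (D + 1)] with k hk
      have h0 := norm_nonneg (u k)
      have hk0 : (1 : ℝ) ≤ k := by exact_mod_cast (by omega : 1 ≤ k)
      have hpos : (0 : ℝ) < (1 + ‖u k‖ + k) ^ k := by positivity
      rw [div_le_div_iff₀ hpos (by linarith)]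
      calc |MvPolynomial.eval (u k) q| * k ≤ (C * (1 + ‖u k‖) ^ D) * k := by
            gcongr; exact h _
        _ ≤ (C * (1 + ‖u k‖ + k) ^ D) * (1 + ‖u k‖ + k) := by
            refine mul_le_mul (mul_le_mul_of_nonneg_left
              (pow_le_pow_left₀ (by positivity) (by linarith) D) hC) (by linarith)
              (by positivity) (by positivity)
        _ = C * (1 + ‖u k‖ + k) ^ (D + 1) := by ring
        _ ≤ C * (1 + ‖u k‖ + k) ^ k := by
            gcongr
            linarith

lemma exists_generic (d : ℕ) : ∃ u : ℕ → Fin d → ℝ, ∀ p : MvPolynomial (Fin d) ℝ, p ≠ 0 →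
    ∃ c : ℝ, 0 < c ∧ ∀ᶠ k in atTop, c ≤ |MvPolynomial.eval (u k) p| := by
  induction d with
  | zero =>
    refine ⟨fun _ => 0, fun p hp => ?_⟩
    obtain ⟨a, rfl⟩ := MvPolynomial.C_surjective (Fin 0) p
    have ha : a ≠ 0 := by rintro rfl; simp at hp
    exact ⟨|a|, abs_pos.mpr ha, Eventually.of_forall fun k => by simp⟩
  | succ d ih =>
    obtain ⟨u, hu⟩ := ih
    obtain ⟨y, hy1, hy⟩ := exists_dominating u
    refine ⟨fun k => Fin.cons (y k) (u k), fun p hp => ?_⟩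
    set P := MvPolynomial.finSuccEquiv ℝ d p with hP
    have hP0 : P ≠ 0 := by
      rw [hP]; simpa using hp
    obtain ⟨c, hc, hcev⟩ := hu P.leadingCoeff (Polynomial.leadingCoeff_ne_zero.mpr hP0)
    set r : ℕ → ℝ := fun k => ∑ i ∈ Finset.range P.natDegree,
      |MvPolynomial.eval (u k) (P.coeff i)| / y k with hr
    have hlim : Tendsto r atTop (nhds 0) := by
      have := tendsto_finsetSum (Finset.range P.natDegree) (fun i _ => hy (P.coeff i))
      simpa using this
    refine ⟨c / 2, by positivity, ?_⟩
    filter_upwards [hcev, hlim.eventually (gt_mem_nhds (half_pos hc))] with k hk1 hk2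
    rw [MvPolynomial.eval_eq_eval_mv_eval', ← hP, Polynomial.eval_map,
      Polynomial.eval₂_eq_sum_range, Finset.sum_range_succ]
    have hy0 : 0 < y k := by linarith [hy1 k]
    have hyN : 1 ≤ y k ^ P.natDegree := one_le_pow₀ (hy1 k)
    have hsum : |∑ i ∈ Finset.range P.natDegree, MvPolynomial.eval (u k) (P.coeff i) * y k ^ i|
        ≤ r k * y k ^ P.natDegree := by
      refine (Finset.abs_sum_le_sum_abs _ _).trans ?_
      rw [hr, Finset.sum_mul]
      refine Finset.sum_le_sum fun i hi => ?_
      have hi' : i + 1 ≤ P.natDegree := Finset.mem_range.mp hi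
      rw [abs_mul, abs_of_pos (pow_pos hy0 i), div_mul_eq_mul_div, le_div_iff₀ hy0, mul_assoc,
        ← pow_succ]
      exact mul_le_mul_of_nonneg_left (pow_le_pow_right₀ (hy1 k) hi') (abs_nonneg _)
    have htop : c * y k ^ P.natDegree
        ≤ |MvPolynomial.eval (u k) (P.coeff P.natDegree) * y k ^ P.natDegree| := by
      rw [abs_mul, abs_of_pos (pow_pos hy0 _)]
      exact mul_le_mul_of_nonneg_right hk1 (by positivity)
    have h3 := abs_sub_abs_le_abs_add
      (MvPolynomial.eval (u k) (P.coeff P.natDegree) * y k ^ P.natDegree)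
      (∑ i ∈ Finset.range P.natDegree, MvPolynomial.eval (u k) (P.coeff i) * y k ^ i)
    rw [add_comm] at h3
    have h4 : r k * y k ^ P.natDegree ≤ c / 2 * y k ^ P.natDegree := by gcongr
    have h5 : c / 2 * 1 ≤ c / 2 * y k ^ P.natDegree := by gcongr
    change c / 2 ≤ |_|
    refine le_trans ?_ h3
    linarith

lemma det_UT {n : ℕ} {A : Mat n ℝ} (hA : A ∈ UTset n) : IsUnit A.det := by
  rw [Matrix.det_of_upperTriangular (fun i j h => hA.2 i j h)]
  simp [hA.1]

lemma matOfSeq_mul {n : ℕ} (a b : ℕ → Mat n ℝ) :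
    matOfSeq n a * matOfSeq n b = matOfSeq n (fun k => a k * b k) := by
  have hsum : ∀ (s : Finset (Fin n)) (f : Fin n → ℕ → ℝ),
      ∑ i ∈ s, Hyperreal.ofSeq (f i) = Hyperreal.ofSeq (fun k => ∑ i ∈ s, f i k) := by
    intro s f
    classical
    induction s using Finset.induction_on with
    | empty => rfl
    | insert a s ha ih =>
      rw [Finset.sum_insert ha, ih]
      simp only [Finset.sum_insert ha]
      rfl
  ext i j
  simp only [Matrix.mul_apply, matOfSeq, Matrix.of_apply]
  rw [← hsum]
  rfl

lemma matOfSeq_eq {n : ℕ} {a b : ℕ → Mat n ℝ} (h : matOfSeq n a = matOfSeq n b) :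
    ∀ᶠ k in hyperfilter ℕ, a k = b k := by
  have : ∀ i j, ∀ᶠ k in hyperfilter ℕ, a k i j = b k i j := by
    intro i j
    have := congrFun (congrFun h i) j
    exact Germ.coe_eq.mp this
  filter_upwards [eventually_all.mpr fun i => eventually_all.mpr (this i)] with k hk
  ext i j
  exact hk i j

lemma matCast_eq {n : ℕ} (g : Mat n ℝ) : matCast g = matOfSeq n (fun _ => g) := rfl

lemma one_eq_matOfSeq {n : ℕ} : (1 : Mat n Hyperreal) = matOfSeq n (fun _ => 1) := by
  ext i j
  by_cases h : i = j
  · subst h; simp [matOfSeq]; rfl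
  · simp [matOfSeq, h]; rfl

lemma near_seq {n : ℕ} {G H : Set (Mat n ℝ)} {g : Mat n ℝ} {a : ℕ → Mat n ℝ}
    (h : NearCoset n G g H (matOfSeq n a)) :
    ∃ e b : ℕ → Mat n ℝ, Tendsto e (hyperfilter ℕ) (nhds 1) ∧
      (∀ᶠ k in hyperfilter ℕ, b k ∈ H) ∧ ∀ᶠ k in hyperfilter ℕ, a k = e k * (g * b k) := by
  obtain ⟨_, ⟨⟨e, he, rfl⟩, hinf⟩, _, ⟨_, rfl, _, ⟨b, hb, rfl⟩, rfl⟩, hab⟩ := h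
  refine ⟨e, b, ?_, hb, ?_⟩
  · refine tendsto_pi_nhds.mpr fun i => tendsto_pi_nhds.mpr fun j => ?_
    have h1 := hinf i j
    rw [one_eq_matOfSeq] at h1
    have h2 : Tendsto (fun k => e k i j - (1 : Mat n ℝ) i j) (hyperfilter ℕ) (nhds 0) :=
      Hyperreal.isSt_ofSeq_iff_tendsto.mp h1
    have h3 := h2.add_const ((1 : Mat n ℝ) i j)
    simpa using h3
  · rw [matCast_eq] at hab
    simp only [matOfSeq_mul] at hab
    exact matOfSeq_eq hab.symm

lemma evm_continuous {n : ℕ} (p : MvPolynomial (Fin n × Fin n) ℝ) :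
    Continuous (fun A : Mat n ℝ => evm p A) := by
  unfold evm
  refine (MvPolynomial.continuous_eval p).comp ?_
  unfold matEval
  fun_prop

/-- The vanishing ideal of a set of matrices. -/
def vanI {n : ℕ} (N : Set (Mat n ℝ)) : Ideal (MvPolynomial (Fin n × Fin n) ℝ) where
  carrier := {p | ∀ A ∈ N, evm p A = 0}
  add_mem' := fun {a b} ha hb A hA => by
    have h1 := ha A hA
    have h2 := hb A hA
    simp only [evm] at *
    rw [map_add, h1, h2, add_zero]
  zero_mem' := fun A _ => by simp [evm]
  smul_mem' := fun c x hx A hA => by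
    have h1 := hx A hA
    simp only [evm] at *
    rw [smul_eq_mul, map_mul, h1, mul_zero]

lemma mem_coset {n : ℕ} {g a : Mat n ℝ} {N : Set (Mat n ℝ)} (hg : g ∈ UTset n) :
    a ∈ ({g} : Set (Mat n ℝ)) * N ↔ g⁻¹ * a ∈ N := by
  rw [Set.singleton_mul, Set.mem_image]
  constructor
  · rintro ⟨b, hb, rfl⟩
    rwa [Matrix.nonsing_inv_mul_cancel_left _ _ (det_UT hg)]
  · intro h
    exact ⟨_, h, Matrix.mul_nonsing_inv_cancel_left _ _ (det_UT hg)⟩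

lemma ker_group {n : ℕ} {N : Set (Mat n ℝ)} (hN : IsRealUnipotentGroup n N)
    (p : MvPolynomial (Fin n × Fin n) ℝ)
    (hp : ∀ a ∈ N, ∀ b ∈ N, evm p (a * b) = evm p a + evm p b) :
    IsRealUnipotentGroup n {a | a ∈ N ∧ evm p a = 0} := by
  have hp1 : evm p 1 = 0 := by
    have := hp 1 hN.2.1 1 hN.2.1
    rw [one_mul] at this
    linarith
  refine ⟨?_, ⟨hN.2.1, hp1⟩, ?_, ?_⟩
  · obtain ⟨⟨S, hS⟩, -⟩ := hN
    refine ⟨insert p S, ?_⟩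
    ext A
    rw [hS]
    simp only [Set.mem_ofPred_eq, Set.forall_mem_insert, evm]
    tauto
  · rintro a ⟨ha, ha0⟩ b ⟨hb, hb0⟩
    exact ⟨hN.2.2.1 a ha b hb, by rw [hp a ha b hb, ha0, hb0, add_zero]⟩
  · rintro a ⟨ha, ha0⟩
    refine ⟨hN.2.2.2 a ha, ?_⟩
    have := hp a ha _ (hN.2.2.2 a ha)
    rw [Matrix.mul_nonsing_inv _ (det_UT (hN.ut ha)), hp1, ha0] at this
    linarith

lemma evm_aeval' {n d : ℕ} (f : Fin n × Fin n → MvPolynomial (Fin d) ℝ)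
    (p : MvPolynomial (Fin n × Fin n) ℝ) (x : Fin d → ℝ) (C : Mat n ℝ)
    (h : ∀ i j, MvPolynomial.eval x (f (i, j)) = C i j) :
    MvPolynomial.eval x (MvPolynomial.aeval f p) = evm p C := by
  unfold evm
  induction p using MvPolynomial.induction_on with
  | C a => simp
  | add p q hp hq => rw [map_add, map_add, hp, hq, map_add]
  | mul_X p s hp =>
    rw [map_mul, map_mul, hp, MvPolynomial.aeval_X, map_mul, MvPolynomial.eval_X]
    rw [show s = (s.1, s.2) from rfl, h]
    rfl

/-- if `gH` is the minimal coset containing the image `X` of a polynomial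
map, then some `α ∈ X^♯` has nearest coset exactly `gH`. -/
theorem stmt17 {n d : ℕ} (G : Set (Mat n ℝ)) (hG : IsRealUnipotentGroup n G)
    (F : (Fin d → ℝ) → Mat n ℝ) (hFpoly : IsPolyMapVec d n F) (hFG : ∀ x, F x ∈ G)
    (X : Set (Mat n ℝ)) (hX : X = Set.range F)
    (g : Mat n ℝ) (hg : g ∈ G) (H : Set (Mat n ℝ)) (hH : IsRealAlgSubgroup n G H)
    (hXgH : X ⊆ {g} * H)
    (hmin : ∀ g' ∈ G, ∀ H' : Set (Mat n ℝ), IsRealAlgSubgroup n G H' → X ⊆ {g'} * H' →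
      {g} * H ⊆ {g'} * H') :
    ∃ α ∈ matSharp n X, NearCoset n G g H α ∧
      ∀ g' ∈ G, ∀ H' : Set (Mat n ℝ), IsRealAlgSubgroup n G H' → NearCoset n G g' H' α →
        {g} * H ⊆ {g'} * H' := by
  obtain ⟨u, hu⟩ := exists_generic d
  have hXg : ∀ x, g⁻¹ * F x ∈ H := fun x =>
    (mem_coset (hG.ut hg)).mp (hXgH (by rw [hX]; exact ⟨x, rfl⟩))
  refine ⟨matOfSeq n (fun k => F (u k)), ⟨fun k => F (u k), Eventually.of_forall fun k => ?_, rfl⟩,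
    ?_, ?_⟩
  · rw [hX]; exact ⟨u k, rfl⟩
  · refine ⟨1, ⟨⟨fun _ => 1, Eventually.of_forall fun _ => hG.2.1, one_eq_matOfSeq⟩, ?_⟩, _,
      ⟨_, rfl, _, ⟨fun k => g⁻¹ * F (u k), Eventually.of_forall fun k => hXg _, rfl⟩, rfl⟩, ?_⟩
    · intro i j
      rw [sub_self]
      exact Hyperreal.infinitesimal_zero
    · rw [matCast_eq]
      simp only [matOfSeq_mul, one_mul,
        Matrix.mul_nonsing_inv_cancel_left _ _ (det_UT (hG.ut hg))]
  intro g' hg' H' hH' hnear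
  obtain ⟨e, b, he, hb, heq⟩ := near_seq hnear
  have hgu := det_UT (hG.ut hg')
  let T : Set (Ideal (MvPolynomial (Fin n × Fin n) ℝ)) :=
    {I | ∃ N, IsRealAlgSubgroup n G N ∧ H' ⊆ N ∧ {g} * H ⊆ {g'} * N ∧ vanI N = I}
  have hT : T.Nonempty := by
    refine ⟨_, G, ⟨subset_rfl, hG⟩, hH'.1, ?_, rfl⟩
    intro a ha
    rw [mem_coset (hG.ut hg')]
    obtain ⟨_, rfl, h, hh, rfl⟩ := ha
    exact hG.2.2.1 _ (hG.2.2.2 _ hg') _ (hG.2.2.1 _ hg _ (hH.1 hh))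
  obtain ⟨I, ⟨N, hN, hHN, hgN, rfl⟩, hmax⟩ :=
    WellFounded.has_min (wellFounded_gt (α := Ideal (MvPolynomial (Fin n × Fin n) ℝ))) T hT
  by_cases hNH : N ⊆ H'
  · rwa [subset_antisymm hNH hHN] at hgN
  exfalso
  obtain ⟨p, hpadd, hpH, a0, ha0, hpa0⟩ := exists_hom hN.2 hH'.2 hHN hNH
  have hp1 : evm p 1 = 0 := hpH 1 hH'.2.2.1
  have hFN : ∀ x, g'⁻¹ * F x ∈ N := fun x =>
    (mem_coset (hG.ut hg')).mp (hgN (hXgH (by rw [hX]; exact ⟨x, rfl⟩)))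
  obtain ⟨P, hP⟩ := hFpoly
  obtain ⟨q, hq⟩ : ∃ q : MvPolynomial (Fin d) ℝ,
      ∀ x, MvPolynomial.eval x q = evm p (g'⁻¹ * F x) := by
    refine ⟨MvPolynomial.aeval (fun ij => ∑ k, (g'⁻¹ : Mat n ℝ) ij.1 k • P k ij.2) p, fun x => ?_⟩
    apply evm_aeval'
    intro i j
    simp [Matrix.mul_apply, hP, MvPolynomial.smul_eval]
  have hq0 : q = 0 := by
    by_contra hq0
    obtain ⟨c, hc, hcev⟩ := hu q hq0
    have h1 : Tendsto (fun k => evm p (g'⁻¹ * e k * g')) (hyperfilter ℕ) (nhds 0) := by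
      have h2 : Tendsto (fun k => g'⁻¹ * e k * g') (hyperfilter ℕ) (nhds (g'⁻¹ * 1 * g')) :=
        (he.const_mul g'⁻¹).mul_const g'
      rw [mul_one, Matrix.nonsing_inv_mul _ hgu] at h2
      have h3 := ((evm_continuous p).tendsto 1).comp h2
      rw [hp1] at h3
      exact h3
    have h4 : ∀ᶠ k in hyperfilter ℕ, |evm p (g'⁻¹ * e k * g')| < c := by
      have h5 := h1.abs
      rw [abs_zero] at h5
      exact h5.eventually (gt_mem_nhds hc)
    obtain ⟨k, hk1, hk2, hk3, hk4⟩ :=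
      (h4.and (hb.and (heq.and (hcev.filter_mono Nat.hyperfilter_le_atTop)))).exists
    rw [hq] at hk4
    have hbu := det_UT (hH'.2.ut hk2)
    have h6 : g'⁻¹ * e k * g' = (g'⁻¹ * F (u k)) * (b k)⁻¹ := by
      rw [hk3]
      simp only [mul_assoc]
      rw [Matrix.mul_nonsing_inv _ hbu, mul_one]
    have hbi := hH'.2.2.2.2 _ hk2
    rw [h6, hpadd _ (hFN _) _ (hHN hbi), hpH _ hbi, add_zero] at hk1
    linarith
  have hM : IsRealAlgSubgroup n G {a | a ∈ N ∧ evm p a = 0} :=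
    ⟨fun a ha => hN.1 ha.1, ker_group hN.2 p hpadd⟩
  refine hmax (vanI {a | a ∈ N ∧ evm p a = 0})
    ⟨_, hM, fun h hh => ⟨hHN hh, hpH h hh⟩, hmin g' hg' _ hM ?_, rfl⟩ ?_
  · rw [hX]
    rintro _ ⟨x, rfl⟩
    rw [mem_coset (hG.ut hg')]
    exact ⟨hFN x, by rw [← hq, hq0, map_zero]⟩
  · refine lt_of_le_of_ne (fun r hr A hA => hr A hA.1) ?_
    intro heqI
    have : p ∈ vanI {a | a ∈ N ∧ evm p a = 0} := fun A hA => hA.2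
    rw [← heqI] at this
    exact hpa0 (this a0 ha0)
end
end

section
/- Let β = (β₁,…,β_d) ∈ (ℝ*)^d be a tuple of hyperreals such that β₁ > r for every real number r, and for every i with 1 ≤ i ≤ d−1 and every real polynomial q in i variables, β_{i+1} > q(β₁,…,β_i). Then for every nonconstant real polynomial q in d variables, q(β) is not finite, i.e. |q(β)| > r for every real number r. -/
open Pointwise Filter

noncomputable section

/-- Lower bound step: nonzero polynomials are bounded below by a positive real,
and nonconstant ones are infinite, at a fast growing tuple. -/
theorem stmt18_aux {d : ℕ} (β : Fin d → Hyperreal)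
    (hb : ∀ i : Fin d, ∀ q : MvPolynomial (Fin d) ℝ,
      (∀ j ∈ q.vars, (j : ℕ) < (i : ℕ)) →
      MvPolynomial.eval₂ realHyperRingHom β q < β i) (n : ℕ) :
    ∀ q : MvPolynomial (Fin d) ℝ, 0 < q.totalDegree → q.totalDegree ≤ n →
      ∀ r : ℝ, (r : Hyperreal) < |MvPolynomial.eval₂ realHyperRingHom β q| := by
  induction n with
  | zero => intro q h h'; omega
  | succ n ih =>
    intro q hq hqn r
    have hne : q.vars.Nonempty := by
      rw [Finset.nonempty_iff_ne_empty]
      intro h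
      rw [MvPolynomial.vars_eq_empty_iff_eq_C] at h
      rw [MvPolynomial.totalDegree_eq_zero_iff_eq_C.2 h] at hq
      exact lt_irrefl _ hq
    obtain ⟨i, hi, hmax⟩ := q.vars.exists_max_image (fun j => j) hne
    set s : Fin d →₀ ℕ := Finsupp.single i 1 with hs
    set q' := q.divMonomial s with hq'
    set c := q.modMonomial s with hc
    have hdec : MvPolynomial.X i * q' + c = q := by
      exact MvPolynomial.divMonomial_add_modMonomial_single q i
    have hq'0 : q' ≠ 0 := by
      obtain ⟨m, hm, him⟩ := (MvPolynomial.mem_vars i).1 hi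
      intro h0
      have h3 : MvPolynomial.coeff (m - s) q' = MvPolynomial.coeff (s + (m - s)) q :=
        MvPolynomial.coeff_divMonomial _ _ _
      have hle : s ≤ m := by
        rw [hs, Finsupp.single_le_iff]
        exact Nat.one_le_iff_ne_zero.2 (Finsupp.mem_support_iff.1 him)
      rw [add_tsub_cancel_of_le hle, h0] at h3
      exact (MvPolynomial.mem_support_iff.1 hm) (by simpa using h3.symm)
    have hdeg : q'.totalDegree ≤ n := by
      rw [MvPolynomial.totalDegree]
      refine Finset.sup_le fun m hm => ?_
      have h3 : MvPolynomial.coeff m q' = MvPolynomial.coeff (s + m) q :=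
        MvPolynomial.coeff_divMonomial _ _ _
      have h4 : s + m ∈ q.support := by
        rw [MvPolynomial.mem_support_iff, ← h3]
        exact MvPolynomial.mem_support_iff.1 hm
      have h5 := MvPolynomial.le_totalDegree h4
      rw [Finsupp.sum_add_index' (by simp) (by simp), hs,
        Finsupp.sum_single_index (by simp)] at h5
      omega
    have hcv : ∀ j ∈ c.vars, (j : ℕ) < (i : ℕ) := by
      intro j hj
      obtain ⟨m, hm, hjm⟩ := (MvPolynomial.mem_vars j).1 hj
      rw [MvPolynomial.mem_support_iff] at hm
      have hle : ¬ s ≤ m := fun h => hm (MvPolynomial.coeff_modMonomial_of_le _ h)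
      rw [hc, MvPolynomial.coeff_modMonomial_of_not_le _ hle] at hm
      have h1 : j ≤ i := hmax j
        ((MvPolynomial.mem_vars j).2 ⟨m, MvPolynomial.mem_support_iff.2 hm, hjm⟩)
      have h2 : j ≠ i := by
        rintro rfl
        apply hle
        rw [hs, Finsupp.single_le_iff]
        exact Nat.one_le_iff_ne_zero.2 (Finsupp.mem_support_iff.1 hjm)
      exact Fin.lt_def.1 (lt_of_le_of_ne h1 h2)
    obtain ⟨ε, hε, hlow⟩ : ∃ ε : ℝ, 0 < ε ∧
        (ε : Hyperreal) ≤ |MvPolynomial.eval₂ realHyperRingHom β q'| := by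
      rcases Nat.eq_zero_or_pos q'.totalDegree with h | h
      · have h6 := MvPolynomial.totalDegree_eq_zero_iff_eq_C.1 h
        set a := MvPolynomial.coeff 0 q'
        have ha : a ≠ 0 := fun h0 => hq'0 (by rw [h6, h0, MvPolynomial.C_0])
        refine ⟨|a|, abs_pos.2 ha, ?_⟩
        rw [h6, MvPolynomial.eval₂_C, Hyperreal.coe_abs]
        exact le_refl _
      · exact ⟨1, one_pos, (ih q' h hdeg 1).le⟩
    have key : ∀ t : ℝ, (|r| : ℝ) + t * MvPolynomial.eval₂ realHyperRingHom β c
        < ε * β i := by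
      intro t
      have h7 := hb i (MvPolynomial.C ε⁻¹ * (MvPolynomial.C |r| + MvPolynomial.C t * c)) (by
        intro j hj
        apply hcv
        have h8 := MvPolynomial.vars_mul _ _ hj
        rw [MvPolynomial.vars_C, Finset.empty_union] at h8
        have h9 := MvPolynomial.vars_add_subset _ _ h8
        rw [MvPolynomial.vars_C, Finset.empty_union] at h9
        have h10 := MvPolynomial.vars_mul _ _ h9
        rwa [MvPolynomial.vars_C, Finset.empty_union] at h10)
      simp only [MvPolynomial.eval₂_mul, MvPolynomial.eval₂_add, MvPolynomial.eval₂_C] at h7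
      have hε' : (0 : Hyperreal) < (ε : Hyperreal) := Hyperreal.coe_pos.2 hε
      have h11 := mul_lt_mul_of_pos_left h7 hε'
      have h12 : (ε : Hyperreal) * realHyperRingHom ε⁻¹ = 1 := by
        change realHyperRingHom ε * realHyperRingHom ε⁻¹ = 1
        rw [← map_mul, mul_inv_cancel₀ hε.ne', map_one]
      rw [← mul_assoc, h12, one_mul] at h11
      exact h11
    have hbpos : 0 < β i := by
      have := hb i 0 (by simp)
      simpa using this
    have k1 := key 1
    have k2 := key (-1)
    have hr : (r : Hyperreal) ≤ (|r| : ℝ) := Hyperreal.coe_le_coe.2 (le_abs_self r)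
    have hev : MvPolynomial.eval₂ realHyperRingHom β q =
        β i * MvPolynomial.eval₂ realHyperRingHom β q' +
          MvPolynomial.eval₂ realHyperRingHom β c := by
      conv_lhs => rw [← hdec]
      rw [MvPolynomial.eval₂_add, MvPolynomial.eval₂_mul, MvPolynomial.eval₂_X]
    rw [hev]
    generalize MvPolynomial.eval₂ realHyperRingHom β q' = u at *
    generalize MvPolynomial.eval₂ realHyperRingHom β c = v at *
    have h13 : (ε : Hyperreal) * β i ≤ |β i * u| := by
      rw [abs_mul, abs_of_pos hbpos, mul_comm]
      exact mul_le_mul_of_nonneg_left hlow hbpos.le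
    rw [Hyperreal.coe_one] at k1
    rw [Hyperreal.coe_neg, Hyperreal.coe_one] at k2
    have h14 : |β i * u| - |v| ≤ |β i * u + v| := by
      have := abs_sub_abs_le_abs_sub (β i * u) (-v)
      rwa [abs_neg, sub_neg_eq_add] at this
    have h15 : (|r| : ℝ) + |v| < ε * β i := by
      rcases abs_choice v with h | h <;> rw [h] <;> linarith
    linarith

/-- every nonconstant real polynomial is infinite at a sufficiently fast
growing tuple of hyperreals. -/
theorem stmt18 {d : ℕ} (hd : 0 < d) (β : Fin d → Hyperreal)
    (h1 : ∀ r : ℝ, (r : Hyperreal) < β ⟨0, hd⟩)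
    (h2 : ∀ i : Fin d, 1 ≤ (i : ℕ) → ∀ q : MvPolynomial (Fin d) ℝ,
      (∀ j ∈ q.vars, (j : ℕ) < (i : ℕ)) →
      MvPolynomial.eval₂ realHyperRingHom β q < β i) :
    ∀ q : MvPolynomial (Fin d) ℝ, 0 < q.totalDegree →
      ∀ r : ℝ, (r : Hyperreal) < |MvPolynomial.eval₂ realHyperRingHom β q| := by
  intro q hq
  refine stmt18_aux β (fun i p hp => ?_) q.totalDegree q hq le_rfl
  rcases Nat.eq_zero_or_pos (i : ℕ) with h | h
  · have h0 : p.vars = ∅ := by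
      rw [Finset.eq_empty_iff_forall_notMem]
      intro j hj
      have := hp j hj
      omega
    have hpc := MvPolynomial.vars_eq_empty_iff_eq_C.1 h0
    have hi : i = ⟨0, hd⟩ := Fin.ext h
    rw [hpc, MvPolynomial.eval₂_C, hi]
    exact h1 _
  · exact h2 i h p hp
end
end
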